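/- Let 1 ≤ v ≤ m and let B'' ⊆ ℒ^{mn} be a ball. For every A ∈ B'', every x ∈ ℒ and every pair (i,j) with 1 ≤ i ≤ m, 1 ≤ j ≤ n such that A + x E_{ij} ∈ B'', one has ‖M_{v-1}(A + x E_{ij}) − M_{v-1}(A)‖_∞ ≤ ‖x‖ M_{v-2}(B''); consequently, for all A, A' ∈ B'', ‖M_{v-1}(A) − M_{v-1}(A')‖_∞ ≤ ‖A − A'‖_∞ M_{v-2}(B''). -/

import Mathlib

/-!
Common setup: the field `ℒ = 𝔽((X⁻¹))` of formal Laurent series with coefficients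
in a finite field `𝔽` of `k` elements.  We realize `ℒ` as `LaurentSeries 𝔽`
(Hahn series over `ℤ`) in the variable `T = X⁻¹`, so that `X` corresponds to `T⁻¹`
and the polynomial ring `𝔽[X]` corresponds to series supported on nonpositive
exponents.  The absolute value of `x = Σ_{i ≤ N} a_i X^i` (with `a_N ≠ 0`) is
`k^N`, i.e. `k^(-order x)` in terms of the `T`-adic order.
-/

open scoped Classical ENNReal NNReal
open MeasureTheory

noncomputable section

namespace FSBad

/-- The field `ℒ = 𝔽((X⁻¹))`. -/
abbrev L (𝔽 : Type) [Field 𝔽] : Type := LaurentSeries 𝔽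

variable {𝔽 : Type} [Field 𝔽] [Fintype 𝔽]

/-- The absolute value `‖·‖` on `ℒ`: `‖x‖ = k^(deg_X x)`, `‖0‖ = 0`. -/
def lnorm (x : L 𝔽) : ℝ := if x = 0 then 0 else (Fintype.card 𝔽 : ℝ) ^ (-x.order)

/-- Membership in the polynomial ring `𝔽[X] ⊆ ℒ` (polynomials in `X = T⁻¹`). -/
def IsPoly (x : L 𝔽) : Prop := ∀ i : ℤ, 0 < i → x.coeff i = 0

/-- The height (sup-norm) `‖·‖_∞` on `ℒ^ι`. -/
def vnorm {ι : Type*} (x : ι → L 𝔽) : ℝ := ⨆ i, lnorm (x i)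

/-- The closed ball in `ℒ^ι` with centre `c` and radius `ρ`. -/
def vball {ι : Type*} (c : ι → L 𝔽) (ρ : ℝ) : Set (ι → L 𝔽) :=
  {x | vnorm (fun i => x i - c i) ≤ ρ}

/-- `m × n` matrices over `ℒ`, identified with `ℒ^(mn)`. -/
abbrev Mat (𝔽 : Type) [Field 𝔽] (m n : ℕ) : Type := Matrix (Fin m) (Fin n) (L 𝔽)

/-- The height of a matrix, i.e. the sup-norm on `ℒ^(mn)`. -/
def mnorm {m n : ℕ} (A : Mat 𝔽 m n) : ℝ := ⨆ p : Fin m × Fin n, lnorm (A p.1 p.2)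

/-- The closed ball in `ℒ^(mn)` with centre `c` and radius `ρ`. -/
def mball {m n : ℕ} (c : Mat 𝔽 m n) (ρ : ℝ) : Set (Mat 𝔽 m n) :=
  {A | mnorm (A - c) ≤ ρ}

/-- The distance `⟨x⟩` from `x ∈ ℒ^h` to the polynomial lattice `𝔽[X]^h`. -/
def latDist {h : ℕ} (x : Fin h → L 𝔽) : ℝ :=
  sInf {r : ℝ | ∃ p : Fin h → L 𝔽, (∀ i, IsPoly (p i)) ∧ r = vnorm (fun i => x i - p i)}

/-- The set `𝔅(m,n)` of badly approximable systems of `m` linear forms in `n`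
variables over `ℒ`. -/
def Bad (𝔽 : Type) [Field 𝔽] [Fintype 𝔽] (m n : ℕ) : Set (Mat 𝔽 m n) :=
  {A | ∃ K : ℝ, 0 < K ∧ ∀ q : Fin m → L 𝔽, (∀ i, IsPoly (q i)) → q ≠ 0 →
    latDist (Matrix.vecMul q A) ^ n > K / vnorm q ^ m}

/-- The Hausdorff `s`-measure of `E ⊆ ℒ^(mn)`, defined through countable covers by
balls of radii `< δ`, letting `δ → 0` (the infimum over `δ`-covers is nonincreasing
in `δ`, so the limit is the supremum over `δ > 0`). -/
def hMeasure {m n : ℕ} (s : ℝ) (E : Set (Mat 𝔽 m n)) : ℝ≥0∞ :=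
  ⨆ (δ : ℝ) (_ : 0 < δ),
    ⨅ (c : ℕ → Mat 𝔽 m n) (ρ : ℕ → ℝ) (_ : ∀ i, 0 < ρ i ∧ ρ i < δ)
      (_ : E ⊆ ⋃ i, mball (c i) (ρ i)), ∑' i, ENNReal.ofReal (ρ i ^ s)

/-- The Hausdorff dimension of `E ⊆ ℒ^(mn)`. -/
def hdim {m n : ℕ} (E : Set (Mat 𝔽 m n)) : ℝ :=
  sInf {s : ℝ | 0 ≤ s ∧ hMeasure s E = 0}

/-! ### Schmidt `(α,β)`-games on `ℒ^(mn)` -/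

/-- A formal ball: an element of `Ω = ℒ^(mn) × ℝ`. -/
structure FBall (𝔽 : Type) [Field 𝔽] (m n : ℕ) where
  /-- centre -/
  c : Mat 𝔽 m n
  /-- radius -/
  r : ℝ

/-- Formal inclusion of formal balls: `(c₁,ρ₁) ⊆ (c₂,ρ₂)` iff `ρ₁ + ‖c₁ - c₂‖_∞ ≤ ρ₂`. -/
def FBall.ssub {m n : ℕ} (B₁ B₂ : FBall 𝔽 m n) : Prop :=
  B₁.r + mnorm (B₁.c - B₂.c) ≤ B₂.r

/-- The subset of `ℒ^(mn)` determined by a formal ball. -/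
def FBall.toSet {m n : ℕ} (B : FBall 𝔽 m n) : Set (Mat 𝔽 m n) := mball B.c B.r

/-- A strategy for White: given the balls `B₁, …, B_{i+1}` chosen by Black so far,
produce White's next ball. -/
abbrev Strategy (𝔽 : Type) [Field 𝔽] (m n : ℕ) : Type :=
  (i : ℕ) → (Fin (i + 1) → FBall 𝔽 m n) → FBall 𝔽 m n

/-- White's move at stage `i` when following strategy `str` against Black's balls `B`. -/
def wMove {m n : ℕ} (str : Strategy 𝔽 m n) (B : ℕ → FBall 𝔽 m n) (i : ℕ) : FBall 𝔽 m n :=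
  str i fun j => B j.1

/-- Black's move `B_{j+2}` is legal (for parameter `β`): it is a formal subset of
White's ball `W_{j+1}` and has radius `β · ρ(W_{j+1})`. -/
def BlackOk {m n : ℕ} (β : ℝ) (str : Strategy 𝔽 m n) (B : ℕ → FBall 𝔽 m n) (j : ℕ) : Prop :=
  (B (j + 1)).ssub (wMove str B j) ∧ (B (j + 1)).r = β * (wMove str B j).r

/-- White's move `W_{i+1}` is legal (for parameter `α`): it is a formal subset of
Black's ball `B_{i+1}` and has radius `α · ρ(B_{i+1})`. -/
def WhiteOk {m n : ℕ} (α : ℝ) (str : Strategy 𝔽 m n) (B : ℕ → FBall 𝔽 m n) (i : ℕ) : Prop :=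
  (wMove str B i).ssub (B i) ∧ (wMove str B i).r = α * (B i).r

/-- `str` is a winning strategy for White in the `(α,β;S)`-game: against any
sequence of Black balls, White's moves are legal as long as Black has played
legally so far, and if the whole play is legal then the intersection of the
chosen balls is contained in `S`. -/
def WinningStrategy {m n : ℕ} (α β : ℝ) (S : Set (Mat 𝔽 m n)) (str : Strategy 𝔽 m n) : Prop :=
  ∀ B : ℕ → FBall 𝔽 m n, 0 ≤ (B 0).r →
    (∀ i, (∀ j < i, BlackOk β str B j) → WhiteOk α str B i) ∧
    ((∀ j, BlackOk β str B j) → (⋂ i, (B i).toSet) ⊆ S)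

/-- `S` is `(α,β)`-winning. -/
def IsWinningAB {m n : ℕ} (α β : ℝ) (S : Set (Mat 𝔽 m n)) : Prop :=
  ∃ str : Strategy 𝔽 m n, WinningStrategy α β S str

/-- `S` is `α`-winning. -/
def IsWinningA {m n : ℕ} (α : ℝ) (S : Set (Mat 𝔽 m n)) : Prop :=
  ∀ β : ℝ, 0 < β → β < 1 → IsWinningAB α β S

/-- The winning dimension of `S` (a supremum of a set of reals, which is `0` by
convention when the set is empty). -/
def windim {m n : ℕ} (S : Set (Mat 𝔽 m n)) : ℝ :=
  sSup {α : ℝ | 0 < α ∧ α < 1 ∧ IsWinningA α S}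

/-! ### The matrices `Ā`, `Ā^*` and the quantities `M_v`, `D_v`, `∇D_v` -/

/-- `Ā = [[A, I_m], [I_n, 0]]`. Rows are indexed by `Fin m ⊕ Fin n`
(coordinates `q_1, …, q_{m+n}`), columns by `Fin n ⊕ Fin m`. -/
def Abar {m n : ℕ} (A : Mat 𝔽 m n) : Matrix (Fin m ⊕ Fin n) (Fin n ⊕ Fin m) (L 𝔽) :=
  Matrix.fromBlocks A 1 1 0

/-- `Ā^* = [[Aᵀ, I_n], [I_m, 0]]`. Rows are indexed by `Fin n ⊕ Fin m`,
columns by `Fin m ⊕ Fin n`. -/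
def AbarStar {m n : ℕ} (A : Mat 𝔽 m n) : Matrix (Fin n ⊕ Fin m) (Fin m ⊕ Fin n) (L 𝔽) :=
  Matrix.fromBlocks A.transpose 1 1 0

/-- The standard bilinear form `x·y = Σ_i x_i y_i` on `ℒ^ι`. -/
def dotL {ι : Type*} [Fintype ι] (x y : ι → L 𝔽) : L 𝔽 := ∑ i, x i * y i

/-- Strictly increasing `v`-tuples `1 ≤ i_1 < ⋯ < i_v ≤ m`. -/
def IncTuple (v m : ℕ) : Type := {f : Fin v → Fin m // StrictMono f}

/-- The vector `M_v(A) ∈ ℒ^(C(m,v)²)` of the determinants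
`det (y_{i_r} · C_{j_s}(Ā^*))_{1 ≤ r,s ≤ v}` over all strictly increasing index
tuples.  (For `v = 0` every coordinate is an empty determinant, i.e. `1`.) -/
def MvVec {m n : ℕ} (y : Fin m → (Fin n ⊕ Fin m → L 𝔽)) (v : ℕ) (A : Mat 𝔽 m n) :
    IncTuple v m × IncTuple v m → L 𝔽 := fun p =>
  Matrix.det (Matrix.of fun r s : Fin v =>
    dotL (y (p.1.1 r)) fun t => AbarStar A t (Sum.inl (p.2.1 s)))

/-- `‖M_v(A)‖_∞`. -/
def MvNorm {m n : ℕ} (y : Fin m → (Fin n ⊕ Fin m → L 𝔽)) (v : ℕ) (A : Mat 𝔽 m n) : ℝ :=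
  vnorm (MvVec y v A)

/-- `M_v(K) = max_{A ∈ K} ‖M_v(A)‖_∞` for `K ⊆ ℒ^(mn)`. -/
def MvSet {m n : ℕ} (y : Fin m → (Fin n ⊕ Fin m → L 𝔽)) (v : ℕ) (K : Set (Mat 𝔽 m n)) : ℝ :=
  sSup {r : ℝ | ∃ A ∈ K, r = MvNorm y v A}

/-- `D_v(A) = det (y_h · C_l(Ā^*))_{1 ≤ h,l ≤ v}`. -/
def Dv {m n : ℕ} (y : Fin m → (Fin n ⊕ Fin m → L 𝔽)) (v : ℕ) (hv : v ≤ m)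
    (A : Mat 𝔽 m n) : L 𝔽 :=
  Matrix.det (Matrix.of fun h l : Fin v =>
    dotL (y (Fin.castLE hv h)) fun t => AbarStar A t (Sum.inl (Fin.castLE hv l)))

/-- The discrete gradient `∇D_v(A) ∈ ℒ^(mn)`, with coordinates
`D_v(A + E_{ij}) - D_v(A)`. -/
def gradDv {m n : ℕ} (y : Fin m → (Fin n ⊕ Fin m → L 𝔽)) (v : ℕ) (hv : v ≤ m)
    (A : Mat 𝔽 m n) : Fin m × Fin n → L 𝔽 := fun p =>
  Dv y v hv (A + Matrix.single p.1 p.2 1) - Dv y v hv A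

/-- `y_1, …, y_m ∈ ℒ^(m+n)` form an orthonormal system: `y_h · y_{h'} = δ_{h h'}`
and `‖t_1 y_1 + ⋯ + t_m y_m‖_∞ = max_h ‖t_h‖`. -/
def OrthoSystem {m n : ℕ} (y : Fin m → (Fin n ⊕ Fin m → L 𝔽)) : Prop :=
  (∀ h h', dotL (y h) (y h') = if h = h' then 1 else 0) ∧
  (∀ t : Fin m → L 𝔽, vnorm (fun r => ∑ h, t h * y h r) = ⨆ h, lnorm (t h))

/-! ### Distance functions, parallelepipeds and successive minima -/

/-- The `j`-th successive minimum of a distance function `F` on `ℒ^N`: the infimum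
of all `λ > 0` such that `{F < λ}` contains `j` linearly independent points of
`𝔽[X]^N`. -/
def succMin {N : ℕ} (F : (Fin N → L 𝔽) → ℝ) (j : ℕ) : ℝ :=
  sInf {lam : ℝ | 0 < lam ∧ ∃ v : Fin j → (Fin N → L 𝔽),
    (∀ r, ∀ i, IsPoly (v r i)) ∧ LinearIndependent (L 𝔽) v ∧ ∀ r, F (v r) < lam}

/-- The distance function `F_A(x) = max_j c_j⁻¹ ‖Σ_i x_i a_{ij}‖`. -/
def FA {N : ℕ} (A : Matrix (Fin N) (Fin N) (L 𝔽)) (c : Fin N → ℝ)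
    (x : Fin N → L 𝔽) : ℝ :=
  ⨆ j, (c j)⁻¹ * lnorm (∑ i, x i * A i j)

/-- The parallelepiped `P_A(λ) = {x ∈ ℒ^N : F_A(x) < λ}`. -/
def PA {N : ℕ} (A : Matrix (Fin N) (Fin N) (L 𝔽)) (c : Fin N → ℝ) (lam : ℝ) :
    Set (Fin N → L 𝔽) := {x | FA A c x < lam}

/-- The polar distance function `F_A^*(y) = sup_{x ≠ 0} ‖x·y‖ / F_A(x)`. -/
def FAstar {N : ℕ} (A : Matrix (Fin N) (Fin N) (L 𝔽)) (c : Fin N → ℝ)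
    (y : Fin N → L 𝔽) : ℝ :=
  ⨆ x : {x : Fin N → L 𝔽 // x ≠ 0}, lnorm (dotL x.1 y) / FA A c x.1

/-! ### Haar measure, characterized by translation invariance and normalization -/

/-- The Borel σ-algebra on `ℒ^N`, generated by the balls. -/
def vecSigma (𝔽 : Type) [Field 𝔽] [Fintype 𝔽] (N : ℕ) : MeasurableSpace (Fin N → L 𝔽) :=
  MeasurableSpace.generateFrom {s | ∃ c ρ, (0 : ℝ) < ρ ∧ s = vball c ρ}

/-- `μ` is the Haar measure on `ℒ^N`: translation invariant and normalized so that
the unit ball `I^N` has measure `1` (these properties determine it uniquely). -/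
def IsHaarVec {N : ℕ} (μ : @Measure (Fin N → L 𝔽) (vecSigma 𝔽 N)) : Prop :=
  (∀ (v : Fin N → L 𝔽) (s : Set (Fin N → L 𝔽)), μ ((fun x => x + v) ⁻¹' s) = μ s) ∧
  μ {x | ∀ i, lnorm (x i) < 1} = 1

/-- The Borel σ-algebra on `ℒ^(mn)`, generated by the balls. -/
def matSigma (𝔽 : Type) [Field 𝔽] [Fintype 𝔽] (m n : ℕ) : MeasurableSpace (Mat 𝔽 m n) :=
  MeasurableSpace.generateFrom {s | ∃ c ρ, (0 : ℝ) < ρ ∧ s = mball c ρ}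

/-- `μ` is the Haar measure on `ℒ^(mn)`: translation invariant and normalized so
that the unit ball `I^(mn)` has measure `1`. -/
def IsHaarMat {m n : ℕ} (μ : @Measure (Mat 𝔽 m n) (matSigma 𝔽 m n)) : Prop :=
  (∀ (v : Mat 𝔽 m n) (s : Set (Mat 𝔽 m n)), μ ((fun x => x + v) ⁻¹' s) = μ s) ∧
  μ {A | ∀ i j, lnorm (A i j) < 1} = 1

/-! ### The constants of Section 3 -/

/-- `τ = m/(m+n)`. -/
def tau (m n : ℕ) : ℝ := m / (m + n)

/-- `δ = R^(-m(m+n)²)`. -/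
def del (R : ℝ) (m n : ℕ) : ℝ := R ^ (-((m : ℝ) * ((m : ℝ) + n) ^ 2))

/-- `δ* = R^(-n(m+n)²)`. -/
def delStar (R : ℝ) (m n : ℕ) : ℝ := R ^ (-((n : ℝ) * ((m : ℝ) + n) ^ 2))

lemma lnorm_nonneg (x : L 𝔽) : 0 ≤ lnorm x := by
  unfold lnorm; split_ifs <;> positivity

lemma lnorm_zero : lnorm (0 : L 𝔽) = 0 := by simp [lnorm]

lemma lnorm_one : lnorm (1 : L 𝔽) = 1 := by simp [lnorm]

lemma lnorm_neg (x : L 𝔽) : lnorm (-x) = lnorm x := by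
  simp [lnorm, HahnSeries.order_neg]

lemma lnorm_mul (x y : L 𝔽) : lnorm (x * y) = lnorm x * lnorm y := by
  by_cases hx : x = 0
  · simp [lnorm, hx]
  by_cases hy : y = 0
  · simp [lnorm, hy]
  have hc : (Fintype.card 𝔽 : ℝ) ≠ 0 := by simp
  have hxy : x * y ≠ 0 := mul_ne_zero hx hy
  rw [lnorm, lnorm, lnorm, if_neg hx, if_neg hy, if_neg hxy, HahnSeries.order_mul hx hy,
    neg_add, zpow_add₀ hc]

lemma lnorm_add_le {x y : L 𝔽} {C : ℝ} (hx : lnorm x ≤ C) (hy : lnorm y ≤ C) :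
    lnorm (x + y) ≤ C := by
  by_cases h0 : x = 0
  · simpa [h0] using hy
  by_cases h1 : y = 0
  · simpa [h1] using hx
  by_cases h : x + y = 0
  · rw [h, lnorm_zero]; exact (lnorm_nonneg x).trans hx
  have hc : (1 : ℝ) ≤ Fintype.card 𝔽 := by exact_mod_cast Fintype.card_pos
  rw [lnorm, if_neg h0] at hx
  rw [lnorm, if_neg h1] at hy
  rw [lnorm, if_neg h]
  rcases min_le_iff.1 (HahnSeries.min_order_le_order_add h) with h2 | h2
  · exact (zpow_le_zpow_right₀ hc (neg_le_neg h2)).trans hx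
  · exact (zpow_le_zpow_right₀ hc (neg_le_neg h2)).trans hy

lemma lnorm_sum_le {ι : Type*} (s : Finset ι) (f : ι → L 𝔽) {C : ℝ} (hC : 0 ≤ C)
    (h : ∀ i ∈ s, lnorm (f i) ≤ C) : lnorm (∑ i ∈ s, f i) ≤ C :=
  Finset.sum_induction f (fun x => lnorm x ≤ C) (fun _ _ => lnorm_add_le)
    (by rw [lnorm_zero]; exact hC) h

lemma lnorm_prod_le {ι : Type*} (s : Finset ι) (f : ι → L 𝔽) {C : ℝ} (hC : 0 ≤ C)
    (h : ∀ i ∈ s, lnorm (f i) ≤ C) : lnorm (∏ i ∈ s, f i) ≤ C ^ s.card := by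
  have : lnorm (∏ i ∈ s, f i) = ∏ i ∈ s, lnorm (f i) := by
    induction s using Finset.induction_on with
    | empty => simp [lnorm_one]
    | insert a s ha ih =>
      rw [Finset.prod_insert ha, Finset.prod_insert ha, lnorm_mul,
        ih (fun i hi => h i (Finset.mem_insert_of_mem hi))]
  rw [this]
  calc _ ≤ ∏ _i ∈ s, C := Finset.prod_le_prod (fun i _ => lnorm_nonneg _) h
    _ = _ := Finset.prod_const C

lemma lnorm_neg_one_pow (k : ℕ) : lnorm ((-1 : L 𝔽) ^ k) = 1 := by
  rcases neg_one_pow_eq_or (L 𝔽) k with h | h <;> rw [h]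
  · exact lnorm_one
  · rw [lnorm_neg, lnorm_one]

lemma lnorm_det_le {w : ℕ} (M : Matrix (Fin w) (Fin w) (L 𝔽)) {R : ℝ} (hR : 0 ≤ R)
    (h : ∀ r s, lnorm (M r s) ≤ R) : lnorm M.det ≤ R ^ w := by
  induction w with
  | zero => simp [lnorm_one]
  | succ w ih =>
    rw [Matrix.det_succ_column M 0]
    refine lnorm_sum_le _ _ (by positivity) fun i _ => ?_
    rw [lnorm_mul, lnorm_mul, lnorm_neg_one_pow, one_mul, pow_succ, mul_comm]
    exact mul_le_mul (ih _ fun r s => h _ _) (h _ _) (lnorm_nonneg _) (by positivity)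

instance (w m : ℕ) : Finite (IncTuple w m) := by unfold IncTuple; infer_instance

lemma le_vnorm {ι : Type*} [Finite ι] (x : ι → L 𝔽) (i : ι) : lnorm (x i) ≤ vnorm x :=
  le_ciSup (f := fun i => lnorm (x i)) (Set.finite_range _).bddAbove i

lemma le_mnorm {m n : ℕ} (A : Mat 𝔽 m n) (i : Fin m) (j : Fin n) : lnorm (A i j) ≤ mnorm A :=
  le_ciSup (f := fun p : Fin m × Fin n => lnorm (A p.1 p.2)) (Set.finite_range _).bddAbove (i, j)

lemma mnorm_nonneg {m n : ℕ} (A : Mat 𝔽 m n) : 0 ≤ mnorm A :=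
  Real.iSup_nonneg fun _ => lnorm_nonneg _

lemma ortho_le {m n : ℕ} {y : Fin m → (Fin n ⊕ Fin m → L 𝔽)} (hy : OrthoSystem y)
    (h : Fin m) (r : Fin n ⊕ Fin m) : lnorm (y h r) ≤ 1 := by
  have h1 := hy.2 (fun h' => if h' = h then 1 else 0)
  have h2 := le_vnorm (fun r => ∑ h', (if h' = h then (1 : L 𝔽) else 0) * y h' r) r
  rw [h1] at h2
  simp only [ite_mul, one_mul, zero_mul, Finset.sum_ite_eq', Finset.mem_univ, if_true] at h2
  refine h2.trans (Real.iSup_le (fun h' => ?_) zero_le_one)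
  split_ifs
  · rw [lnorm_one]
  · rw [lnorm_zero]; exact zero_le_one

lemma MvNorm_nonneg {m n : ℕ} (y : Fin m → (Fin n ⊕ Fin m → L 𝔽)) (w : ℕ) (A : Mat 𝔽 m n) :
    0 ≤ MvNorm y w A := Real.iSup_nonneg fun _ => lnorm_nonneg _

lemma MvSet_nonneg {m n : ℕ} (y : Fin m → (Fin n ⊕ Fin m → L 𝔽)) (w : ℕ) (K : Set (Mat 𝔽 m n)) :
    0 ≤ MvSet y w K := by
  apply Real.sSup_nonneg
  rintro r ⟨A, _, rfl⟩
  exact MvNorm_nonneg y w A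

lemma MvNorm_le_MvSet {m n : ℕ} {y : Fin m → (Fin n ⊕ Fin m → L 𝔽)} (hy : OrthoSystem y)
    (w : ℕ) (c : Mat 𝔽 m n) (ρ : ℝ) (A : Mat 𝔽 m n) (hA : A ∈ mball c ρ) :
    MvNorm y w A ≤ MvSet y w (mball c ρ) := by
  refine le_csSup ⟨(max 1 (max ρ (mnorm c))) ^ w, ?_⟩ ⟨A, hA, rfl⟩
  rintro r ⟨B, hB, rfl⟩
  have hR : (1 : ℝ) ≤ max 1 (max ρ (mnorm c)) := le_max_left _ _
  set R := max 1 (max ρ (mnorm c)) with hRdef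
  have hR0 : 0 ≤ R := zero_le_one.trans hR
  have hB' : ∀ i j, lnorm (B i j) ≤ R := fun i j => by
    have : B i j = (B - c) i j + c i j := by simp
    rw [this]
    refine lnorm_add_le (((le_mnorm _ i j).trans hB).trans ?_) ((le_mnorm _ i j).trans ?_)
    · exact (le_max_left _ _).trans (le_max_right _ _)
    · exact (le_max_right _ _).trans (le_max_right _ _)
  refine Real.iSup_le (fun p => ?_) (by positivity)
  refine lnorm_det_le _ hR0 fun r s => ?_
  rw [Matrix.of_apply, dotL]
  refine lnorm_sum_le _ _ hR0 fun t _ => ?_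
  rw [lnorm_mul]
  refine (mul_le_mul (ortho_le hy _ _) (?_ : _ ≤ R) (lnorm_nonneg _) zero_le_one).trans_eq
    (one_mul R)
  rcases t with t | t
  · exact hB' _ _
  · simp only [AbarStar, Matrix.fromBlocks_apply₂₁, Matrix.one_apply]
    split_ifs
    · rw [lnorm_one]; exact hR
    · rw [lnorm_zero]; exact hR0

lemma entry_add {m n : ℕ} (z : Fin n ⊕ Fin m → L 𝔽) (A : Mat 𝔽 m n) (x : L 𝔽) (i l : Fin m)
    (j : Fin n) :
    dotL z (fun t => AbarStar (A + Matrix.single i j x) t (Sum.inl l)) =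
      dotL z (fun t => AbarStar A t (Sum.inl l)) + if i = l then z (Sum.inl j) * x else 0 := by
  simp only [dotL, AbarStar, Fintype.sum_sum_type, Matrix.fromBlocks_apply₁₁,
    Matrix.fromBlocks_apply₂₁, Matrix.transpose_apply, Matrix.add_apply, mul_add,
    Finset.sum_add_distrib]
  have : ∑ k, z (Sum.inl k) * Matrix.single i j x l k = if i = l then z (Sum.inl j) * x else 0 := by
    rw [Finset.sum_eq_single j]
    · by_cases h : i = l <;> simp [Matrix.single_apply, h]
    · intro b _ hb
      simp [Matrix.single_apply, hb.symm]
    · simp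
  rw [this]; ring

lemma step {m n : ℕ} {y : Fin m → (Fin n ⊕ Fin m → L 𝔽)} (hy : OrthoSystem y)
    (u : ℕ) (A : Mat 𝔽 m n) (x : L 𝔽) (i : Fin m) (j : Fin n)
    (p : IncTuple (u + 1) m × IncTuple (u + 1) m) :
    lnorm (MvVec y (u + 1) (A + Matrix.single i j x) p - MvVec y (u + 1) A p) ≤
      lnorm x * MvNorm y u A := by
  have hnn : 0 ≤ lnorm x * MvNorm y u A := mul_nonneg (lnorm_nonneg _) (MvNorm_nonneg _ _ _)
  unfold MvVec
  simp only [entry_add]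
  by_cases hs : ∃ s, i = p.2.1 s
  · obtain ⟨s0, hs0⟩ := hs
    rw [Matrix.det_succ_column _ s0, Matrix.det_succ_column _ s0, ← Finset.sum_sub_distrib]
    refine lnorm_sum_le _ _ hnn fun r _ => ?_
    have hminor : (Matrix.of fun r s : Fin (u + 1) =>
          dotL (y (p.1.1 r)) (fun t => AbarStar A t (Sum.inl (p.2.1 s))) +
            if i = p.2.1 s then y (p.1.1 r) (Sum.inl j) * x else 0).submatrix
          r.succAbove s0.succAbove =
        (Matrix.of fun r s : Fin (u + 1) =>
          dotL (y (p.1.1 r)) (fun t => AbarStar A t (Sum.inl (p.2.1 s)))).submatrix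
          r.succAbove s0.succAbove := by
      ext a b
      have : ¬ i = p.2.1 (s0.succAbove b) := by
        rw [hs0]
        intro h
        exact Fin.succAbove_ne s0 b (p.2.2.injective h).symm
      simp [this]
    rw [hminor, ← sub_mul, ← mul_sub]
    simp only [Matrix.of_apply, add_sub_cancel_left, if_pos hs0]
    rw [lnorm_mul, lnorm_mul, lnorm_neg_one_pow, one_mul, lnorm_mul]
    refine mul_le_mul ?_ ?_ (lnorm_nonneg _) (lnorm_nonneg _)
    · exact (mul_le_mul_of_nonneg_right (ortho_le hy _ _) (lnorm_nonneg _)).trans_eq (one_mul _)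
    · exact le_vnorm (MvVec y u A)
        (⟨p.1.1 ∘ r.succAbove, p.1.2.comp (Fin.strictMono_succAbove r)⟩,
         ⟨p.2.1 ∘ s0.succAbove, p.2.2.comp (Fin.strictMono_succAbove s0)⟩)
  · push Not at hs
    simp only [hs, if_false, add_zero, sub_self, lnorm_zero]
    exact hnn

/-- **Theorem (Statement 18).** (Inequality (6) and its consequence.)  On a ball `B''`,
`‖M_{v-1}(A + x E_{ij}) - M_{v-1}(A)‖_∞ ≤ ‖x‖ M_{v-2}(B'')`, and consequently
`‖M_{v-1}(A) - M_{v-1}(A')‖_∞ ≤ ‖A - A'‖_∞ M_{v-2}(B'')` for all `A, A' ∈ B''`. -/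
theorem Mv_partial_derivative_bound (𝔽 : Type) [Field 𝔽] [Fintype 𝔽] (m n : ℕ)
    (hm : 0 < m) (hn : 0 < n)
    (y : Fin m → (Fin n ⊕ Fin m → L 𝔽)) (hy : OrthoSystem y)
    (v : ℕ) (hv1 : 1 ≤ v) (hv : v ≤ m)
    (c'' : Mat 𝔽 m n) (ρ'' : ℝ) :
    (∀ A ∈ mball c'' ρ'', ∀ (x : L 𝔽) (i : Fin m) (j : Fin n),
      A + Matrix.single i j x ∈ mball c'' ρ'' →
      vnorm (fun p => MvVec y (v - 1) (A + Matrix.single i j x) p -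
          MvVec y (v - 1) A p) ≤
        lnorm x * MvSet y (v - 2) (mball c'' ρ'')) ∧
    (∀ A ∈ mball c'' ρ'', ∀ A' ∈ mball c'' ρ'',
      vnorm (fun p => MvVec y (v - 1) A p - MvVec y (v - 1) A' p) ≤
        mnorm (A - A') * MvSet y (v - 2) (mball c'' ρ'')) := by
  obtain rfl | ⟨u, rfl⟩ : v = 1 ∨ ∃ u, v = u + 2 := by
    rcases v with _ | _ | u
    · omega
    · exact Or.inl rfl
    · exact Or.inr ⟨u, rfl⟩
  · have h0 : ∀ A A' : Mat 𝔽 m n, vnorm (fun p => MvVec y (1 - 1) A p - MvVec y (1 - 1) A' p) ≤ 0 := by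
      intro A A'
      refine Real.iSup_le (fun p => ?_) le_rfl
      have : ∀ B : Mat 𝔽 m n, MvVec y (1 - 1) B p = 1 := fun B => Matrix.det_fin_zero
      simp only [this, sub_self, lnorm_zero, le_refl]
    exact ⟨fun A _ x i j _ => (h0 _ _).trans (mul_nonneg (lnorm_nonneg _) (MvSet_nonneg _ _ _)),
      fun A _ A' _ => (h0 _ _).trans (mul_nonneg (mnorm_nonneg _) (MvSet_nonneg _ _ _))⟩
  change (∀ A ∈ mball c'' ρ'', ∀ (x : L 𝔽) (i : Fin m) (j : Fin n),
      A + Matrix.single i j x ∈ mball c'' ρ'' →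
      vnorm (fun p => MvVec y (u + 1) (A + Matrix.single i j x) p -
          MvVec y (u + 1) A p) ≤
        lnorm x * MvSet y u (mball c'' ρ'')) ∧
    (∀ A ∈ mball c'' ρ'', ∀ A' ∈ mball c'' ρ'',
      vnorm (fun p => MvVec y (u + 1) A p - MvVec y (u + 1) A' p) ≤
        mnorm (A - A') * MvSet y u (mball c'' ρ''))
  have key : ∀ A ∈ mball c'' ρ'', ∀ (x : L 𝔽) (i : Fin m) (j : Fin n) p,
      lnorm (MvVec y (u + 1) (A + Matrix.single i j x) p - MvVec y (u + 1) A p) ≤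
        lnorm x * MvSet y u (mball c'' ρ'') := fun A hA x i j p =>
    (step hy u A x i j p).trans
      (mul_le_mul_of_nonneg_left (MvNorm_le_MvSet hy u _ _ A hA) (lnorm_nonneg _))
  refine ⟨fun A hA x i j _ => Real.iSup_le (fun p => key A hA x i j p)
    (mul_nonneg (lnorm_nonneg _) (MvSet_nonneg _ _ _)), fun A hA A' hA' => ?_⟩
  have hnn : 0 ≤ mnorm (A - A') * MvSet y u (mball c'' ρ'') :=
    mul_nonneg (mnorm_nonneg _) (MvSet_nonneg _ _ _)
  refine Real.iSup_le (fun p => ?_) hnn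
  let P : Finset (Fin m × Fin n) → Mat 𝔽 m n := fun S =>
    Matrix.of fun i j => if (i, j) ∈ S then A i j else A' i j
  have hρ : 0 ≤ ρ'' := (mnorm_nonneg _).trans hA
  have hP : ∀ S, P S ∈ mball c'' ρ'' := by
    intro S
    refine Real.iSup_le (fun q => ?_) hρ
    by_cases h : q ∈ S
    · simpa [P, h] using (le_mnorm (A - c'') q.1 q.2).trans hA
    · simpa [P, h] using (le_mnorm (A' - c'') q.1 q.2).trans hA'
  have main : ∀ S, lnorm (MvVec y (u + 1) (P S) p - MvVec y (u + 1) A' p) ≤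
      mnorm (A - A') * MvSet y u (mball c'' ρ'') := by
    intro S
    induction S using Finset.induction_on with
    | empty =>
      have : P ∅ = A' := by ext i j; simp [P]
      rw [this, sub_self, lnorm_zero]; exact hnn
    | insert a S ha ih =>
      have h1 : P (insert a S) = P S + Matrix.single a.1 a.2 ((A - A') a.1 a.2) := by
        refine Matrix.ext fun i j => ?_
        by_cases h : (i, j) = a
        · subst h
          simp [P, ha]
        · have h' : ¬ (a.1 = i ∧ a.2 = j) := fun h2 => h (Prod.ext h2.1.symm h2.2.symm)
          simp only [P, Matrix.of_apply, Matrix.add_apply, Matrix.single_apply, if_neg h',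
            Finset.mem_insert, h, false_or, add_zero]
      rw [h1, ← sub_add_sub_cancel _ (MvVec y (u + 1) (P S) p)]
      refine lnorm_add_le ((key _ (hP S) _ _ _ p).trans ?_) ih
      exact mul_le_mul_of_nonneg_right (le_mnorm _ _ _) (MvSet_nonneg _ _ _)
  have huniv : P Finset.univ = A := by ext i j; simp [P]
  have := main Finset.univ
  rwa [huniv] at this


end FSBad
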